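/- arXiv:2407.10708 — 2 statements merged into one kernel-verified Lean document; each statement's English description precedes it below -/
import Mathlib

section
/- Fix integers q ≥ 1 and γ with 0 ≤ γ ≤ q-1, and reals K < 0 and u > 0. Then lim_{d→∞} P(d,q,γ,K,u) = 0, i.e. for fixed negative curvature the intersection probability tends to 0 as the dimension d tends to infinity. -/
open Real MeasureTheory Filter Asymptotics

/-- Surface area `ω_n = 2 π^{n/2} / Γ(n/2)` of the Euclidean unit sphere in `ℝ^n`. -/
noncomputable def omegaS (n : ℕ) : ℝ := 2 * Real.pi ^ ((n : ℝ) / 2) / Real.Gamma ((n : ℝ) / 2)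

/-- The constant `D(d,q,γ)`. -/
noncomputable def Dconst (d q γ : ℕ) : ℝ :=
  omegaS (γ + 1) * omegaS (q - γ) * omegaS (d - q) / (omegaS (d - q + γ + 1) * omegaS (d - γ))

/-- `R_K(x)`, the Euclidean (Beltrami–Klein) radius of a hyperbolic ball of radius `x`. -/
noncomputable def RK (K x : ℝ) : ℝ :=
  Real.sinh (Real.sqrt (-K) * x) /
    (Real.sqrt (-K) * Real.sqrt (1 + Real.sinh (Real.sqrt (-K) * x) ^ 2))

/-- `C_K(d,m,u)`, the invariant measure of the `m`-flats meeting the ball of radius `u`. -/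
noncomputable def Cconst (K : ℝ) (d m : ℕ) (u : ℝ) : ℝ :=
  omegaS (d - m) * Real.sqrt (-K) ^ (-(d : ℝ) + (m : ℝ) + 1) *
    ∫ r in (0:ℝ)..u,
      Real.cosh (Real.sqrt (-K) * r) ^ m * Real.sinh (Real.sqrt (-K) * r) ^ (d - m - 1)

/-- `P(d,q,γ,K,u)`, the hyperbolic intersection probability of the random flats `E` and `L`. -/
noncomputable def Pprob (d q γ : ℕ) (K u : ℝ) : ℝ :=
  Dconst d q γ * omegaS (d - γ) / Cconst K d (d - q + γ) u *
    ∫ r in (0:ℝ)..(1 / Real.sqrt (-K)),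
      r ^ ((q : ℝ) - (γ : ℝ) - 1) *
        ∫ z in (0:ℝ)..(min 1 (RK K u / r)),
          z ^ q * (1 - z ^ 2) ^ (((d : ℝ) - (q : ℝ)) / 2 - 1) *
            (1 + K * r ^ 2 * z ^ 2) ^ (-((d : ℝ) + 1) / 2)

/-- `F_{K,u}(δ)`, the distribution function of the distance of `E ∩ L` to the origin. -/
noncomputable def Fdist (d q γ : ℕ) (K u δ : ℝ) : ℝ :=
  Dconst d q γ * omegaS (d - γ) / Cconst K d (d - q + γ) u *
    ∫ r in (0:ℝ)..(RK K δ),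
      r ^ ((q : ℝ) - (γ : ℝ) - 1) *
        ∫ z in (0:ℝ)..(min 1 (RK K u / r)),
          z ^ q * (1 - z ^ 2) ^ (((d : ℝ) - (q : ℝ)) / 2 - 1) *
            (1 + K * r ^ 2 * z ^ 2) ^ (-((d : ℝ) + 1) / 2)

/-- `f_{d,q,γ,K}(δ)`, the density of the distance of `E ∩ L` to the origin. -/
noncomputable def fdens (d q γ : ℕ) (K u δ : ℝ) : ℝ :=
  Dconst d q γ * omegaS (d - γ) / Cconst K d (d - q + γ) u *
    (RK K δ ^ ((q : ℝ) - (γ : ℝ) - 1) / Real.cosh (Real.sqrt (-K) * δ) ^ 2) *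
    ∫ z in (0:ℝ)..(min 1 (RK K u / RK K δ)),
      z ^ q * (1 - z ^ 2) ^ (((d : ℝ) - (q : ℝ)) / 2 - 1) *
        (1 + K * RK K δ ^ 2 * z ^ 2) ^ (-((d : ℝ) + 1) / 2)

/-- The limiting constant `ρ(u,q,γ,κ)` in the critical phase. -/
noncomputable def rhoConst (u : ℝ) (q γ : ℕ) (κ : ℝ) : ℝ :=
  omegaS (γ + 1) * (2 * Real.pi) ^ (-((γ : ℝ) + 1) / 2) * u ^ (q + 1) *
    κ ^ (((γ : ℝ) + 1) / 2) *
    (∫ s in (0:ℝ)..u, Real.exp (κ * s ^ 2 / 2) * s ^ ((q : ℝ) - (γ : ℝ) - 1))⁻¹ *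
    ∫ r in (0:ℝ)..1,
      r ^ ((q : ℝ) - (γ : ℝ) - 1) *
        ∫ v in (0:ℝ)..(1 / r),
          v ^ q * Real.exp (-(1 / 2) * u ^ 2 * κ * v ^ 2 * (1 - r ^ 2))

lemma aux_omega_pos (n : ℕ) (hn : 1 ≤ n) : 0 < omegaS n := by
  unfold omegaS
  have h : (0:ℝ) < (n:ℝ) / 2 := by positivity
  have := Real.Gamma_pos_of_pos h
  positivity

lemma aux_gamma (m : ℕ) (x : ℝ) (hx : 0 < x) :
    Real.Gamma (x + m) ≤ Real.Gamma x * (x + m) ^ m := by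
  induction m with
  | zero => simp
  | succ m ih =>
    have hG := Real.Gamma_pos_of_pos hx
    have h1 : 0 < x + m := by positivity
    have e : x + ((m + 1 : ℕ) : ℝ) = (x + m) + 1 := by push_cast; ring
    rw [e, Real.Gamma_add_one h1.ne']
    calc (x + m) * Real.Gamma (x + m) ≤ (x + m) * (Real.Gamma x * (x + m) ^ m) := by gcongr
      _ = Real.Gamma x * (x + m) ^ (m + 1) := by ring
      _ ≤ _ := mul_le_mul_of_nonneg_left (pow_le_pow_left₀ h1.le (by linarith) _) hG.le

lemma aux_omega_ratio (m n : ℕ) (hn : 4 ≤ n) :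
    omegaS n / omegaS (n + m) ≤ ((m + 1) * n : ℝ) ^ m := by
  have hn' : (4:ℝ) ≤ n := by exact_mod_cast hn
  have hG := Real.Gamma_pos_of_pos (show (0:ℝ) < (n:ℝ) / 2 by positivity)
  have hG2 := Real.Gamma_pos_of_pos (show (0:ℝ) < ((n + m : ℕ):ℝ) / 2 by positivity)
  have hm : (0:ℝ) ≤ m := by positivity
  have h1 : Real.Gamma (((n + m : ℕ):ℝ) / 2) ≤ Real.Gamma ((n:ℝ) / 2 + m) := by
    apply Real.Gamma_strictMonoOn_Ici.monotoneOn
    · simp only [Set.mem_Ici]; push_cast; linarith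
    · simp only [Set.mem_Ici]; linarith
    · push_cast; linarith
  have h2 := aux_gamma m ((n:ℝ) / 2) (by positivity)
  have h3 : ((n:ℝ) / 2 + m) ^ m ≤ ((m + 1) * n : ℝ) ^ m := by
    gcongr
    nlinarith
  have hpi : Real.pi ^ ((n : ℝ) / 2) ≤ Real.pi ^ (((n + m : ℕ) : ℝ) / 2) := by
    apply Real.rpow_le_rpow_of_exponent_le
    · linarith [Real.pi_gt_three]
    · push_cast; linarith
  rw [div_le_iff₀ (aux_omega_pos _ (by omega))]
  unfold omegaS
  rw [mul_div_assoc', div_le_div_iff₀ hG hG2]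
  have h4 : Real.Gamma (((n + m : ℕ):ℝ) / 2) ≤ Real.Gamma ((n:ℝ) / 2) * ((m + 1) * n : ℝ) ^ m :=
    h1.trans (h2.trans (by gcongr))
  calc 2 * Real.pi ^ ((n : ℝ) / 2) * Real.Gamma (((n + m : ℕ):ℝ) / 2)
      ≤ 2 * Real.pi ^ (((n + m : ℕ) : ℝ) / 2) *
        (Real.Gamma ((n:ℝ) / 2) * ((m + 1) * n : ℝ) ^ m) := by gcongr
    _ = _ := by ring

lemma aux_C (q γ n : ℕ) (hγ : γ < q) (K u : ℝ) (hK : K < 0) (hu : 0 < u) :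
    omegaS (q - γ) * Real.sqrt (-K) ^ (-(q : ℝ) + (γ : ℝ) + 1) *
      (u / 2 * (Real.cosh (Real.sqrt (-K) * (u / 2)) ^ (n + γ) *
        Real.sinh (Real.sqrt (-K) * (u / 2)) ^ (q - γ - 1)))
      ≤ Cconst K (n + q) (n + q - q + γ) u := by
  have hk : 0 < Real.sqrt (-K) := Real.sqrt_pos.mpr (by linarith)
  have e1 : n + q - q + γ = n + γ := by omega
  have e2 : n + q - (n + γ) = q - γ := by omega
  have e3 : (-((n + q : ℕ) : ℝ) + ((n + γ : ℕ) : ℝ) + 1) = -(q : ℝ) + (γ : ℝ) + 1 := by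
    push_cast; ring
  unfold Cconst
  rw [e1, e2, e3]
  have hω := aux_omega_pos (q - γ) (by omega)
  set k := Real.sqrt (-K)
  have hc : Continuous (fun r : ℝ => Real.cosh (k * r) ^ (n + γ) * Real.sinh (k * r) ^ (q - γ - 1)) := by
    fun_prop
  gcongr
  have hi := fun a b : ℝ => hc.intervalIntegrable (μ := volume) a b
  rw [← intervalIntegral.integral_add_adjacent_intervals (hi 0 (u / 2)) (hi (u / 2) u)]
  have h1 : 0 ≤ ∫ r in (0:ℝ)..(u / 2), Real.cosh (k * r) ^ (n + γ) * Real.sinh (k * r) ^ (q - γ - 1) := by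
    apply intervalIntegral.integral_nonneg (by linarith)
    intro r hr
    have : 0 ≤ Real.sinh (k * r) := Real.sinh_nonneg_iff.mpr (mul_nonneg hk.le hr.1)
    have := Real.cosh_pos (k * r)
    positivity
  have h2 : ∫ r in (u / 2)..u, (Real.cosh (k * (u / 2)) ^ (n + γ) *
        Real.sinh (k * (u / 2)) ^ (q - γ - 1)) ≤
      ∫ r in (u / 2)..u, Real.cosh (k * r) ^ (n + γ) * Real.sinh (k * r) ^ (q - γ - 1) := by
    apply intervalIntegral.integral_mono_on (by linarith) (by simp) (hi _ _)
    intro r hr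
    have hle : k * (u / 2) ≤ k * r := by gcongr; exact hr.1
    have h0 : 0 ≤ k * (u / 2) := by positivity
    have hs : 0 ≤ Real.sinh (k * (u / 2)) := Real.sinh_nonneg_iff.mpr h0
    have hs2 : Real.sinh (k * (u / 2)) ≤ Real.sinh (k * r) := Real.sinh_le_sinh.mpr hle
    have hc2 : Real.cosh (k * (u / 2)) ≤ Real.cosh (k * r) := by
      rw [Real.cosh_le_cosh, abs_of_nonneg h0, abs_of_nonneg (h0.trans hle)]
      exact hle
    have := Real.cosh_pos (k * (u / 2))
    gcongr
  rw [intervalIntegral.integral_const, smul_eq_mul] at h2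
  have e : u - u / 2 = u / 2 := by ring
  rw [e] at h2
  linarith

lemma aux_RK (K u : ℝ) (hK : K < 0) (hu : 0 < u) :
    0 < RK K u ∧ 0 < 1 + K * RK K u ^ 2 := by
  have hk : 0 < Real.sqrt (-K) := Real.sqrt_pos.mpr (by linarith)
  have hk2 : Real.sqrt (-K) ^ 2 = -K := Real.sq_sqrt (by linarith)
  have hs : 0 < Real.sinh (Real.sqrt (-K) * u) := Real.sinh_pos_iff.mpr (by positivity)
  unfold RK
  refine ⟨by positivity, ?_⟩
  rw [div_pow, mul_pow, hk2, Real.sq_sqrt (by positivity)]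
  have : 1 + K * (Real.sinh (Real.sqrt (-K) * u) ^ 2 /
      (-K * (1 + Real.sinh (Real.sqrt (-K) * u) ^ 2))) =
      1 / (1 + Real.sinh (Real.sqrt (-K) * u) ^ 2) := by
    have : 1 + Real.sinh (Real.sqrt (-K) * u) ^ 2 ≠ 0 := by positivity
    have := hK.ne
    field_simp
    ring
  rw [this]
  positivity

lemma aux_I (q γ n : ℕ) (hγ : γ < q) (hn : 4 ≤ n) (K u : ℝ) (hK : K < 0) (hu : 0 < u) :
    |∫ r in (0:ℝ)..(1 / Real.sqrt (-K)),
      r ^ ((q : ℝ) - (γ : ℝ) - 1) *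
        ∫ z in (0:ℝ)..(min 1 (RK K u / r)),
          z ^ q * (1 - z ^ 2) ^ ((((n + q : ℕ) : ℝ) - (q : ℝ)) / 2 - 1) *
            (1 + K * r ^ 2 * z ^ 2) ^ (-(((n + q : ℕ) : ℝ) + 1) / 2)|
    ≤ (1 / Real.sqrt (-K)) ^ ((q : ℝ) - (γ : ℝ) - 1) *
        (1 + K * RK K u ^ 2) ^ (-((q : ℝ) + 3) / 2) * (1 / Real.sqrt (-K)) := by
  have hk : 0 < Real.sqrt (-K) := Real.sqrt_pos.mpr (by linarith)
  have hk2 : Real.sqrt (-K) ^ 2 = -K := Real.sq_sqrt (by linarith)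
  obtain ⟨hR, hR2⟩ := aux_RK K u hK hu
  set k := Real.sqrt (-K)
  set R := RK K u
  have hn' : (4:ℝ) ≤ n := by exact_mod_cast hn
  have hγ' : (γ : ℝ) + 1 ≤ q := by exact_mod_cast hγ
  have hkinv : 0 < 1 / k := by positivity
  have key := intervalIntegral.norm_integral_le_of_norm_le_const (a := 0) (b := 1 / k)
    (C := (1 / k) ^ ((q : ℝ) - (γ : ℝ) - 1) * (1 + K * R ^ 2) ^ (-((q : ℝ) + 3) / 2))
    (f := fun r : ℝ => r ^ ((q : ℝ) - (γ : ℝ) - 1) *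
        ∫ z in (0:ℝ)..(min 1 (R / r)),
          z ^ q * (1 - z ^ 2) ^ ((((n + q : ℕ) : ℝ) - (q : ℝ)) / 2 - 1) *
            (1 + K * r ^ 2 * z ^ 2) ^ (-(((n + q : ℕ) : ℝ) + 1) / 2)) ?_
  · rw [Real.norm_eq_abs, sub_zero, abs_of_pos hkinv] at key
    exact key
  intro r hr
  rw [Set.uIoc_of_le hkinv.le] at hr
  obtain ⟨hr0, hr1⟩ := hr
  have hKr : -K * r ^ 2 ≤ 1 := by
    rw [← hk2, ← mul_pow]
    have : k * r ≤ 1 := by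
      rw [le_div_iff₀ hk] at hr1; linarith
    exact pow_le_one₀ (by positivity) this
  rw [norm_mul]
  have hmin : 0 < min 1 (R / r) := by positivity
  gcongr
  · rw [Real.norm_eq_abs, abs_of_nonneg (by positivity)]
    exact Real.rpow_le_rpow hr0.le hr1 (by linarith)
  · refine (intervalIntegral.norm_integral_le_of_norm_le_const
      (C := (1 + K * R ^ 2) ^ (-((q : ℝ) + 3) / 2)) ?_).trans ?_
    · intro z hz
      rw [Set.uIoc_of_le hmin.le] at hz
      obtain ⟨hz0, hz1⟩ := hz
      have hz2 : z ≤ 1 := hz1.trans (min_le_left _ _)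
      have hz3 : z * r ≤ R := by
        have := hz1.trans (min_le_right _ _)
        rwa [le_div_iff₀ hr0] at this
      have hsq : (z * r) ^ 2 ≤ R ^ 2 := by gcongr
      have hw1 : 1 + K * R ^ 2 ≤ 1 + K * r ^ 2 * z ^ 2 := by nlinarith
      have hw0 : 0 < 1 + K * r ^ 2 * z ^ 2 := hR2.trans_le hw1
      have ha : 0 ≤ 1 - z ^ 2 := by nlinarith
      have ha2 : 1 - z ^ 2 ≤ 1 + K * r ^ 2 * z ^ 2 := by nlinarith [sq_nonneg z]
      rw [Real.norm_eq_abs, abs_of_nonneg (by positivity)]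
      calc z ^ q * (1 - z ^ 2) ^ ((((n + q : ℕ) : ℝ) - (q : ℝ)) / 2 - 1) *
            (1 + K * r ^ 2 * z ^ 2) ^ (-(((n + q : ℕ) : ℝ) + 1) / 2)
          ≤ 1 * (1 + K * r ^ 2 * z ^ 2) ^ ((((n + q : ℕ) : ℝ) - (q : ℝ)) / 2 - 1) *
            (1 + K * r ^ 2 * z ^ 2) ^ (-(((n + q : ℕ) : ℝ) + 1) / 2) := by
            gcongr
            · exact pow_le_one₀ hz0.le hz2
            · push_cast; linarith
        _ = (1 + K * r ^ 2 * z ^ 2) ^ (-((q : ℝ) + 3) / 2) := by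
            rw [one_mul, ← Real.rpow_add hw0]
            congr 1
            push_cast; ring
        _ ≤ _ := Real.rpow_le_rpow_of_nonpos hR2 hw1 (by linarith)
    · rw [sub_zero, abs_of_pos hmin]
      exact mul_le_of_le_one_right (by positivity) (min_le_left _ _)

/-- for fixed negative curvature the intersection probability tends to 0
as the dimension tends to infinity. -/
theorem intersection_prob_tendsto_zero_highdim (q γ : ℕ) (hq : 1 ≤ q) (hγ : γ ≤ q - 1)
    (K u : ℝ) (hK : K < 0) (hu : 0 < u) :
    Tendsto (fun d : ℕ => Pprob d q γ K u) atTop (nhds 0) := by 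
  have hγq : γ < q := by omega
  have hk : 0 < Real.sqrt (-K) := Real.sqrt_pos.mpr (by linarith)
  rw [← tendsto_add_atTop_iff_nat q]
  obtain ⟨hR, hR2⟩ := aux_RK K u hK hu
  have hω := aux_omega_pos (q - γ) (by omega)
  have hω1 := aux_omega_pos (γ + 1) (by omega)
  have hs : 0 < Real.sinh (Real.sqrt (-K) * (u / 2)) := Real.sinh_pos_iff.mpr (by positivity)
  have hc : 1 < Real.cosh (Real.sqrt (-K) * (u / 2)) :=
    Real.one_lt_cosh.mpr (by positivity)
  have hC := fun n => aux_C q γ n hγq K u hK hu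
  have hI := fun n hn => aux_I q γ n hγq hn K u hK hu
  set c := Real.cosh (Real.sqrt (-K) * (u / 2))
  set J := (1 / Real.sqrt (-K)) ^ ((q : ℝ) - (γ : ℝ) - 1) *
        (1 + K * RK K u ^ 2) ^ (-((q : ℝ) + 3) / 2) * (1 / Real.sqrt (-K)) with hJ
  have hJ0 : 0 < J := by positivity
  obtain ⟨B, hB, hB2⟩ : ∃ B : ℝ, 0 < B ∧ ∀ n, B * c ^ n ≤ Cconst K (n + q) (n + q - q + γ) u := by
    refine ⟨omegaS (q - γ) * Real.sqrt (-K) ^ (-(q : ℝ) + (γ : ℝ) + 1) *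
      (u / 2 * (c ^ γ * Real.sinh (Real.sqrt (-K) * (u / 2)) ^ (q - γ - 1))), by positivity, ?_⟩
    intro n
    refine le_trans (le_of_eq ?_) (hC n)
    ring
  have hc0 : 0 < c := by linarith
  have hlim : Tendsto (fun n : ℕ => (omegaS (γ + 1) * omegaS (q - γ) * (((γ + 1 : ℕ) : ℝ) + 1) ^ (γ + 1)
      / B * J) * ((n : ℝ) ^ (γ + 1) * (c⁻¹) ^ n)) atTop (nhds 0) := by
    have := tendsto_pow_const_mul_const_pow_of_abs_lt_one (γ + 1) (r := c⁻¹)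
      (by rw [abs_of_pos (by positivity)]; exact inv_lt_one_of_one_lt₀ hc)
    simpa using this.const_mul (omegaS (γ + 1) * omegaS (q - γ) * (((γ + 1 : ℕ) : ℝ) + 1) ^ (γ + 1)
      / B * J)
  refine squeeze_zero_norm' ?_ hlim
  filter_upwards [eventually_ge_atTop 4] with n hn
  have hω2 := aux_omega_pos n (by omega)
  have hω3 := aux_omega_pos (n + (γ + 1)) (by omega)
  have hω4 := aux_omega_pos (n + q - γ) (by omega)
  have hBc : 0 < B * c ^ n := by positivity
  have hCp := hBc.trans_le (hB2 n)
  have hrat := aux_omega_ratio (γ + 1) n hn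
  have e1 : Dconst (n + q) q γ * omegaS (n + q - γ) =
      omegaS (γ + 1) * omegaS (q - γ) * (omegaS n / omegaS (n + (γ + 1))) := by
    unfold Dconst
    rw [show n + q - q = n by omega, show n + γ + 1 = n + (γ + 1) by omega]
    field_simp
  unfold Pprob
  rw [norm_mul, Real.norm_eq_abs, Real.norm_eq_abs, e1, abs_of_nonneg (by positivity)]
  calc _ ≤ omegaS (γ + 1) * omegaS (q - γ) * (((((γ + 1 : ℕ) : ℝ) + 1) * n) ^ (γ + 1)) /
        (B * c ^ n) * J := by
        gcongr
        · exact hB2 n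
        · exact hI n hn
    _ = _ := by
        rw [mul_pow, inv_pow]
        field_simp
end

section
/- Fix integers d ≥ 2, q with 1 ≤ q ≤ d-1, γ with 0 ≤ γ ≤ q-1, and reals u > 0 and δ > 0. Then lim_{K↑0} F_{K,u}(δ) = (D(d,q,γ)·ω_{d-γ}·(q-γ)/(ω_{q-γ}·u^{q-γ})) · ∫_0^δ r^{q-γ-1} · ∫_0^{min(1, u/r)} z^q·(1-z²)^{(d-q)/2-1} dz dr, i.e. the hyperbolic distribution function of the distance of E∩L to the origin converges pointwise, as the curvature tends to 0, to the Euclidean one. -/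
open Real MeasureTheory Filter Asymptotics

open Set Topology Interval

lemma aux_sinh_le {x : ℝ} (hx : 0 ≤ x) : Real.sinh x ≤ x * Real.cosh x := by
  have hmono : MonotoneOn (fun x : ℝ => x * Real.cosh x - Real.sinh x) (Ici 0) := by
    refine monotoneOn_of_deriv_nonneg (convex_Ici 0) ?_ ?_ ?_
    · fun_prop
    · fun_prop
    · intro y hy
      rw [interior_Ici] at hy
      have : HasDerivAt (fun x : ℝ => x * Real.cosh x - Real.sinh x)
          (1 * Real.cosh y + y * Real.sinh y - Real.cosh y) y :=
        ((hasDerivAt_id y).mul (Real.hasDerivAt_cosh y)).sub (Real.hasDerivAt_sinh y)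
      rw [this.deriv]
      have h1 : 0 ≤ Real.sinh y := Real.sinh_nonneg_iff.2 (le_of_lt hy)
      have := mul_nonneg (le_of_lt hy) h1
      linarith
  have := hmono (mem_Ici.2 le_rfl) (mem_Ici.2 hx) hx
  simp at this
  linarith

lemma aux_sqrt : Tendsto (fun K : ℝ => Real.sqrt (-K)) (𝓝[<] 0) (𝓝[>] 0) := by
  refine tendsto_nhdsWithin_iff.2 ⟨?_, ?_⟩
  · have : ContinuousAt (fun K : ℝ => Real.sqrt (-K)) 0 := by fun_prop
    have h := this.tendsto
    simp at h
    exact h.mono_left nhdsWithin_le_nhds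
  · filter_upwards [self_mem_nhdsWithin] with K hK
    exact Real.sqrt_pos.2 (by simpa using hK)

lemma aux_sinh_div (x : ℝ) : Tendsto (fun s : ℝ => Real.sinh (s * x) / s) (𝓝[>] 0) (𝓝 x) := by
  have h : HasDerivAt (fun s : ℝ => Real.sinh (s * x)) (Real.cosh (0 * x) * (1 * x)) 0 :=
    ((hasDerivAt_id (0:ℝ)).mul_const x).sinh
  have h2 := hasDerivAt_iff_tendsto_slope_zero.1 h
  simp at h2
  refine (h2.mono_left (nhdsWithin_mono _ ?_)).congr ?_
  · intro y hy; exact ne_of_gt hy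
  · intro s; rw [div_eq_inv_mul]

lemma aux_RK_eq (K x : ℝ) : RK K x =
    (Real.sinh (Real.sqrt (-K) * x) / Real.sqrt (-K)) / Real.cosh (Real.sqrt (-K) * x) := by
  unfold RK
  have : 1 + Real.sinh (Real.sqrt (-K) * x) ^ 2 = Real.cosh (Real.sqrt (-K) * x) ^ 2 := by
    rw [Real.cosh_sq]; ring
  rw [this, Real.sqrt_sq (Real.cosh_pos _).le, div_div]

lemma aux_RK_tendsto (x : ℝ) : Tendsto (fun K : ℝ => RK K x) (𝓝[<] 0) (𝓝 x) := by
  simp_rw [aux_RK_eq]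
  have h1 := (aux_sinh_div x).comp aux_sqrt
  have hc : Tendsto (fun s : ℝ => Real.cosh (s * x)) (𝓝[>] 0) (𝓝 1) := by
    have : ContinuousAt (fun s : ℝ => Real.cosh (s * x)) 0 := by fun_prop
    have h := this.tendsto
    simp at h
    exact h.mono_left nhdsWithin_le_nhds
  have h := h1.div (hc.comp aux_sqrt) one_ne_zero
  rw [div_one] at h
  exact h

lemma aux_RK_nonneg {K x : ℝ} (hx : 0 ≤ x) : 0 ≤ RK K x := by
  rw [aux_RK_eq]
  have : 0 ≤ Real.sinh (Real.sqrt (-K) * x) := Real.sinh_nonneg_iff.2 (by positivity)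
  have := Real.cosh_pos (Real.sqrt (-K) * x)
  positivity

lemma aux_RK_le {K x : ℝ} (hK : K < 0) (hx : 0 ≤ x) : RK K x ≤ x := by
  rw [aux_RK_eq]
  have hs : 0 < Real.sqrt (-K) := Real.sqrt_pos.2 (by linarith)
  have := aux_sinh_le (x := Real.sqrt (-K) * x) (by positivity)
  rw [div_le_iff₀ (Real.cosh_pos _), div_le_iff₀ hs]
  linarith

lemma aux_trunc {A c : ℝ} (hA : 0 ≤ A) (hc : 0 ≤ c) (f : ℝ → ℝ) :
    ∫ z in (0:ℝ)..(min A c), f z = ∫ z in (0:ℝ)..A, if z ≤ c then f z else 0 := by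
  rw [intervalIntegral.integral_of_le (le_min hA hc), intervalIntegral.integral_of_le hA]
  have : (fun z => if z ≤ c then f z else 0) = (Iic c).indicator f := by
    ext z; simp [indicator]
  rw [this, setIntegral_indicator measurableSet_Iic, Ioc_inter_Iic]

lemma aux_C_s3 (n m : ℕ) (u : ℝ) (hu : 0 < u) :
    Tendsto (fun s : ℝ => ∫ r in (0:ℝ)..u,
      Real.cosh (s * r) ^ m * (Real.sinh (s * r) / s) ^ n) (𝓝[>] 0)
      (𝓝 (u ^ (n + 1) / (n + 1))) := by
  have hI : ∫ r in (0:ℝ)..u, r ^ n = u ^ (n + 1) / (n + 1) := by simp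
  rw [← hI]
  refine intervalIntegral.tendsto_integral_filter_of_dominated_convergence
    (fun _ => Real.cosh u ^ m * (u * Real.cosh u) ^ n) ?_ ?_ ?_ ?_
  · refine Eventually.of_forall fun s => ?_
    exact Continuous.aestronglyMeasurable (by fun_prop)
  · have h1 : ∀ᶠ s : ℝ in 𝓝[>] 0, s < 1 :=
      nhdsWithin_le_nhds (Iio_mem_nhds one_pos)
    filter_upwards [h1, self_mem_nhdsWithin] with s hs hs0
    have hs0 : 0 < s := hs0
    refine Eventually.of_forall fun r hr => ?_
    rw [uIoc_of_le hu.le] at hr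
    have hsr : 0 ≤ s * r := mul_nonneg hs0.le hr.1.le
    have hsu : s * r ≤ u := by nlinarith [hr.1, hr.2]
    have hc : Real.cosh (s * r) ≤ Real.cosh u := by
      rw [Real.cosh_le_cosh, abs_of_nonneg hsr, abs_of_pos hu]; exact hsu
    have hsh : 0 ≤ Real.sinh (s * r) / s := div_nonneg (Real.sinh_nonneg_iff.2 hsr) hs0.le
    have hsh2 : Real.sinh (s * r) / s ≤ u * Real.cosh u := by
      rw [div_le_iff₀ hs0]
      have h3 := aux_sinh_le hsr
      have h4 : r * Real.cosh (s * r) ≤ u * Real.cosh u :=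
        mul_le_mul hr.2 hc (Real.cosh_pos _).le hu.le
      nlinarith
    have := Real.cosh_pos (s * r)
    rw [Real.norm_of_nonneg (by positivity)]
    gcongr
  · exact intervalIntegrable_const
  · refine Eventually.of_forall fun r hr => ?_
    have hc : Tendsto (fun s : ℝ => Real.cosh (s * r)) (𝓝[>] 0) (𝓝 1) := by
      have : ContinuousAt (fun s : ℝ => Real.cosh (s * r)) 0 := by fun_prop
      have h := this.tendsto
      simp at h
      exact h.mono_left nhdsWithin_le_nhds
    simpa using (hc.pow m).mul ((aux_sinh_div r).pow n)

noncomputable def auxH (q : ℕ) (a b K R r z : ℝ) : ℝ :=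
  if z ≤ R / r then z ^ q * (1 - z ^ 2) ^ a * (1 + K * r ^ 2 * z ^ 2) ^ b else 0

lemma aux_rpow_meas (c : ℝ) : Measurable (fun x : ℝ => x ^ c) := by fun_prop

lemma auxH_meas (q : ℕ) (a b K R : ℝ) :
    Measurable (fun p : ℝ × ℝ => auxH q a b K R p.1 p.2) := by
  unfold auxH
  refine Measurable.ite (measurableSet_le (by fun_prop) (by fun_prop)) (by fun_prop) (by fun_prop)

lemma auxH_bound (q : ℕ) {a b K R r z δ : ℝ} (ha : -(1/2) ≤ a) (hb : b ≤ 0) (hK : K ≤ 0)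
    (hKδ : -(1/2) ≤ K * δ ^ 2) (hr : 0 ≤ r) (hrδ : r ≤ δ) (hz : 0 < z) (hz1 : z < 1) :
    ‖auxH q a b K R r z‖ ≤ (1/2:ℝ) ^ b * (1 - z) ^ (-(1/2):ℝ) := by
  have h1z : 0 < 1 - z := by linarith
  have hpos : 0 ≤ (1/2:ℝ) ^ b * (1 - z) ^ (-(1/2):ℝ) := by positivity
  unfold auxH
  split_ifs
  · have hz2 : 0 < 1 - z ^ 2 := by nlinarith
    have hrz : r ^ 2 * z ^ 2 ≤ δ ^ 2 := by
      have : r * z ≤ δ := by nlinarith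
      have h0 : 0 ≤ r * z := by positivity
      nlinarith
    have hbase : 1/2 ≤ 1 + K * r ^ 2 * z ^ 2 := by nlinarith
    have e1 : (1 - z ^ 2) ^ a ≤ (1 - z) ^ (-(1/2):ℝ) :=
      (Real.rpow_le_rpow_of_exponent_ge hz2 (by nlinarith) ha).trans
        (Real.rpow_le_rpow_of_nonpos h1z (by nlinarith) (by norm_num))
    have e2 : (1 + K * r ^ 2 * z ^ 2) ^ b ≤ (1/2:ℝ) ^ b :=
      Real.rpow_le_rpow_of_nonpos (by norm_num) hbase hb
    have e3 : z ^ q ≤ 1 := pow_le_one₀ hz.le hz1.le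
    have p1 : 0 ≤ (1 - z ^ 2) ^ a := by positivity
    have p2 : 0 ≤ (1 + K * r ^ 2 * z ^ 2) ^ b := Real.rpow_nonneg (by linarith) _
    rw [Real.norm_of_nonneg (by positivity)]
    calc z ^ q * (1 - z ^ 2) ^ a * (1 + K * r ^ 2 * z ^ 2) ^ b
        ≤ 1 * (1 - z) ^ (-(1/2):ℝ) * (1/2:ℝ) ^ b := by gcongr
      _ = _ := by ring
  · simpa using hpos

lemma aux_int : IntervalIntegrable (fun z : ℝ => (1 - z) ^ (-(1/2):ℝ)) volume 0 1 := by
  have h := (intervalIntegral.intervalIntegrable_rpow' (a := 0) (b := 1)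
    (r := -(1/2)) (by norm_num)).comp_sub_left 1
  simpa using h.symm

lemma aux_ev (δ : ℝ) : ∀ᶠ K : ℝ in 𝓝[<] 0, -(1/2) ≤ K * δ ^ 2 := by
  have : ContinuousAt (fun K : ℝ => K * δ ^ 2) 0 := by fun_prop
  have h := this.tendsto
  simp only [zero_mul] at h
  exact ((h.mono_left nhdsWithin_le_nhds).eventually (Ioi_mem_nhds (by norm_num : -(1/2:ℝ) < 0))).mono
    fun _ h => le_of_lt h

lemma aux_bound' (q : ℕ) {a b K R r δ : ℝ} (ha : -(1/2) ≤ a) (hb : b ≤ 0) (hK : K ≤ 0)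
    (hKδ : -(1/2) ≤ K * δ ^ 2) (hr : 0 ≤ r) (hrδ : r ≤ δ) :
    ∀ᵐ z : ℝ, z ∈ Ι (0:ℝ) 1 → ‖auxH q a b K R r z‖ ≤ (1/2:ℝ) ^ b * (1 - z) ^ (-(1/2):ℝ) := by
  have : ∀ᵐ z : ℝ, z ≠ 1 := by simp [ae_iff]
  filter_upwards [this] with z hz1 hz
  rw [uIoc_of_le zero_le_one] at hz
  exact auxH_bound q ha hb hK hKδ hr hrδ hz.1 (lt_of_le_of_ne hz.2 hz1)

lemma aux_ite {R : ℝ → ℝ} {F : ℝ → ℝ} {u z f : ℝ} (hR : Tendsto R (𝓝[<] 0) (𝓝 u)) (hz : z ≠ u)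
    (hF : Tendsto F (𝓝[<] 0) (𝓝 f)) :
    Tendsto (fun K => if z ≤ R K then F K else 0) (𝓝[<] 0) (𝓝 (if z ≤ u then f else 0)) := by
  rcases lt_or_gt_of_ne hz with h | h
  · rw [if_pos h.le]
    refine hF.congr' ?_
    filter_upwards [hR.eventually (Ioi_mem_nhds h)] with K hK
    rw [if_pos (le_of_lt hK)]
  · rw [if_neg (not_le.2 h)]
    refine tendsto_const_nhds.congr' ?_
    filter_upwards [hR.eventually (Iio_mem_nhds h)] with K hK
    rw [if_neg (not_le.2 hK)]

lemma aux_inner (q : ℕ) {a b u r δ : ℝ} (ha : -(1/2) ≤ a) (hb : b ≤ 0)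
    (hr : 0 < r) (hrδ : r ≤ δ) :
    Tendsto (fun K => ∫ z in (0:ℝ)..1, auxH q a b K (RK K u) r z) (𝓝[<] 0)
      (𝓝 (∫ z in (0:ℝ)..1, auxH q a b 0 u r z)) := by
  refine intervalIntegral.tendsto_integral_filter_of_dominated_convergence
    (fun z => (1/2:ℝ) ^ b * (1 - z) ^ (-(1/2):ℝ)) ?_ ?_ (aux_int.const_mul _) ?_
  · refine Eventually.of_forall fun K => ?_
    exact ((auxH_meas q a b K (RK K u)).comp (measurable_prodMk_left (x := r))).aestronglyMeasurable
  · filter_upwards [aux_ev δ, self_mem_nhdsWithin] with K h1 h2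
    exact aux_bound' q ha hb (le_of_lt h2) h1 hr.le hrδ
  · have : ∀ᵐ z : ℝ, z ≠ u / r := by simp [ae_iff]
    filter_upwards [this] with z hz _
    unfold auxH
    refine aux_ite (R := fun K => RK K u / r) ((aux_RK_tendsto u).div_const r) hz ?_
    refine Tendsto.mul tendsto_const_nhds ?_
    have : ContinuousAt (fun K : ℝ => (1 + K * r ^ 2 * z ^ 2) ^ b) 0 := by
      refine ContinuousAt.rpow_const (by fun_prop) (Or.inl (by simp))
    exact this.tendsto.mono_left nhdsWithin_le_nhds

lemma aux_outer (q n : ℕ) {a b u δ : ℝ} (ha : -(1/2) ≤ a) (hb : b ≤ 0) (hδ : 0 < δ) :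
    Tendsto (fun K => ∫ r in (0:ℝ)..δ, if r ≤ RK K δ then
        r ^ n * ∫ z in (0:ℝ)..1, auxH q a b K (RK K u) r z else 0) (𝓝[<] 0)
      (𝓝 (∫ r in (0:ℝ)..δ, if r ≤ δ then
        r ^ n * ∫ z in (0:ℝ)..1, auxH q a b 0 u r z else 0)) := by
  set M := ∫ z in (0:ℝ)..1, (1/2:ℝ) ^ b * (1 - z) ^ (-(1/2):ℝ) with hM
  have hM0 : 0 ≤ M := by
    refine intervalIntegral.integral_nonneg zero_le_one fun z hz => ?_
    have : 0 ≤ 1 - z := by linarith [hz.2]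
    positivity
  refine intervalIntegral.tendsto_integral_filter_of_dominated_convergence
    (fun r => δ ^ n * M) ?_ ?_ intervalIntegrable_const ?_
  · refine Eventually.of_forall fun K => ?_
    have hm : Measurable (fun r => ∫ z in (0:ℝ)..1, auxH q a b K (RK K u) r z) := by
      simp_rw [intervalIntegral.integral_of_le (zero_le_one' ℝ)]
      exact ((auxH_meas q a b K (RK K u)).stronglyMeasurable.integral_prod_right'
        (ν := volume.restrict (Ioc (0:ℝ) 1))).measurable
    exact (Measurable.ite measurableSet_Iic (by fun_prop) (by fun_prop)).aestronglyMeasurable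
  · filter_upwards [aux_ev δ, self_mem_nhdsWithin] with K h1 h2
    refine Eventually.of_forall fun r hr => ?_
    rw [uIoc_of_le hδ.le] at hr
    have hr0 := hr.1
    split_ifs
    · rw [norm_mul, Real.norm_of_nonneg (by positivity)]
      have := aux_bound' q (R := RK K u) ha hb (le_of_lt h2) h1 hr.1.le hr.2
      have h3 : ‖∫ z in (0:ℝ)..1, auxH q a b K (RK K u) r z‖ ≤ M := by
        refine intervalIntegral.norm_integral_le_of_norm_le zero_le_one ?_ (aux_int.const_mul _)
        simpa [uIoc_of_le (zero_le_one' ℝ)] using this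
      have := hr.2
      gcongr
    · rw [norm_zero]; positivity
  · have : ∀ᵐ r : ℝ, r ≠ δ := by simp [ae_iff]
    filter_upwards [this] with r hr1 hr
    rw [uIoc_of_le hδ.le] at hr
    exact aux_ite (aux_RK_tendsto δ) hr1 (tendsto_const_nhds.mul (aux_inner q ha hb hr.1 hr.2))

lemma aux_rewrite (q n : ℕ) {c a b K u δ ρ U : ℝ} (hc : c = n) (hρ : 0 ≤ ρ) (hρδ : ρ ≤ δ)
    (hU : 0 ≤ U) :
    (∫ r in (0:ℝ)..ρ, r ^ c * ∫ z in (0:ℝ)..(min 1 (U / r)),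
      z ^ q * (1 - z ^ 2) ^ a * (1 + K * r ^ 2 * z ^ 2) ^ b) =
    ∫ r in (0:ℝ)..δ, if r ≤ ρ then
        r ^ n * ∫ z in (0:ℝ)..1, auxH q a b K U r z else 0 := by
  rw [← aux_trunc (hρ.trans hρδ) hρ, min_eq_right hρδ]
  refine intervalIntegral.integral_congr_ae (Eventually.of_forall fun r hr => ?_)
  rw [uIoc_of_le hρ] at hr
  rw [aux_trunc zero_le_one (div_nonneg hU hr.1.le), hc, Real.rpow_natCast]
  rfl

/-- the hyperbolic distribution function of the distance converges pointwise,
as the curvature tends to 0, to the Euclidean one. -/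
theorem distribution_tendsto_euclidean (d q γ : ℕ) (hd : 2 ≤ d) (hq1 : 1 ≤ q)
    (hq2 : q ≤ d - 1) (hγ : γ ≤ q - 1) (u δ : ℝ) (hu : 0 < u) (hδ : 0 < δ) :
    Tendsto (fun K : ℝ => Fdist d q γ K u δ) (nhdsWithin 0 (Set.Iio 0))
      (nhds (Dconst d q γ * omegaS (d - γ) * ((q : ℝ) - (γ : ℝ)) /
          (omegaS (q - γ) * u ^ ((q : ℝ) - (γ : ℝ))) *
        ∫ r in (0:ℝ)..δ,
          r ^ ((q : ℝ) - (γ : ℝ) - 1) *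
            ∫ z in (0:ℝ)..(min 1 (u / r)),
              z ^ q * (1 - z ^ 2) ^ (((d : ℝ) - (q : ℝ)) / 2 - 1))) := by
  obtain ⟨n, hn⟩ : ∃ n, q = γ + n + 1 := ⟨q - γ - 1, by omega⟩
  have hcn : (q : ℝ) - (γ : ℝ) - 1 = n := by rw [hn]; push_cast; ring
  have hcn' : (q : ℝ) - (γ : ℝ) = ((n + 1 : ℕ) : ℝ) := by rw [hn]; push_cast; ring
  have hdq : (q : ℝ) + 1 ≤ d := by
    have : q + 1 ≤ d := by omega
    exact_mod_cast this
  have ha : -(1/2) ≤ ((d : ℝ) - (q : ℝ)) / 2 - 1 := by linarith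
  have hb : -((d : ℝ) + 1) / 2 ≤ 0 := by
    have : (0:ℝ) ≤ d := Nat.cast_nonneg d
    linarith
  have hω : 0 < omegaS (q - γ) := by
    have : (0:ℝ) < ((q - γ : ℕ) : ℝ) := by
      have : 0 < q - γ := by omega
      exact_mod_cast this
    unfold omegaS
    have := Real.Gamma_pos_of_pos (half_pos this)
    have := Real.pi_pos
    positivity
  have hC : Tendsto (fun K : ℝ => Cconst K d (d - q + γ) u) (𝓝[<] 0)
      (𝓝 (omegaS (q - γ) * (u ^ (n + 1) / (n + 1)))) := by
    refine (((aux_C_s3 n (d - q + γ) u hu).comp aux_sqrt).const_mul (omegaS (q - γ))).congr' ?_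
    filter_upwards [self_mem_nhdsWithin] with K hK
    have hs : 0 < Real.sqrt (-K) := Real.sqrt_pos.2 (by simpa using hK)
    unfold Cconst
    have e1 : d - (d - q + γ) = q - γ := by omega
    have e2 : q - γ - 1 = n := by omega
    have e3 : (-(d:ℝ) + ((d - q + γ : ℕ) : ℝ) + 1) = -(n:ℝ) := by
      rw [Nat.cast_add, Nat.cast_sub (by omega), hn]; push_cast; ring
    rw [e1, e2, e3, Real.rpow_neg hs.le, Real.rpow_natCast, mul_assoc,
      ← intervalIntegral.integral_const_mul]
    simp only [Function.comp]
    congr 1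
    refine intervalIntegral.integral_congr fun r _ => ?_
    simp only [div_pow]
    field_simp
  have hO := aux_outer q n (u := u) ha hb hδ
  have hlim : (∫ r in (0:ℝ)..δ,
          r ^ ((q : ℝ) - (γ : ℝ) - 1) *
            ∫ z in (0:ℝ)..(min 1 (u / r)),
              z ^ q * (1 - z ^ 2) ^ (((d : ℝ) - (q : ℝ)) / 2 - 1)) =
      ∫ r in (0:ℝ)..δ, if r ≤ δ then r ^ n * ∫ z in (0:ℝ)..1,
        auxH q (((d : ℝ) - (q : ℝ)) / 2 - 1) (-((d : ℝ) + 1) / 2) 0 u r z else 0 := by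
    rw [← aux_rewrite q n (u := u) hcn hδ.le le_rfl hu.le]
    simp
  rw [hlim]
  have hne : omegaS (q - γ) * (u ^ (n + 1) / ((n:ℝ) + 1)) ≠ 0 := by positivity
  have hfin := ((tendsto_const_nhds (x := Dconst d q γ * omegaS (d - γ))).div hC hne).mul hO
  have hconst : Dconst d q γ * omegaS (d - γ) * ((q : ℝ) - (γ : ℝ)) /
          (omegaS (q - γ) * u ^ ((q : ℝ) - (γ : ℝ))) =
      Dconst d q γ * omegaS (d - γ) / (omegaS (q - γ) * (u ^ (n + 1) / ((n:ℝ) + 1))) := by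
    rw [hcn', Real.rpow_natCast]
    push_cast
    field_simp
  rw [hconst]
  refine hfin.congr' ?_
  filter_upwards [self_mem_nhdsWithin] with K hK
  unfold Fdist
  rw [aux_rewrite q n (u := u) hcn (aux_RK_nonneg hδ.le) (aux_RK_le hK hδ.le)
    (aux_RK_nonneg hu.le)]
  rfl
end
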